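/- Let n ≥ 1, k = ⌊n/2⌋, let d_0,…,d_k ≥ 0 be not all zero, and set m = Σ_{j=0}^k (j+1)d_j. Then for every 𝔞 ∈ Q_n(d_0,…,d_k) and every i ∈ M(𝔞), the transversal chain T_i(𝔞) is entirely contained in Q_n(d_0,…,d_k), and its length (number of covering relations) equals ℓ_n(d_0,…,d_k) = Σ_{j=0}^k (n − 2j)·d_j. -/

import Mathlib

/- Common definitions following K. O'Hara's spread/degree and the signature
   refinement; elements of A_n(m) are lists of naturals of length n+1 and sum m. -/

namespace OHara

/-- The spread of `a = (a_0, …, a_n)`: the maximum of `a_i + a_{i+1}` over `0 ≤ i ≤ n-1`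
(`0` if the list has length ≤ 1). -/
def sprL (a : List ℕ) : ℕ :=
  (Finset.range (a.length - 1)).sup (fun i => a.getD i 0 + a.getD (i + 1) 0)

/-- `M(a)`: the set of left indices of maximal pairs. -/
def Mset (a : List ℕ) : Finset ℕ :=
  (Finset.range (a.length - 1)).filter (fun i => a.getD i 0 + a.getD (i + 1) 0 = sprL a)

/-- The connected component (maximal interval of consecutive integers) of `i` inside `S`. -/
def compF (S : Finset ℕ) (i : ℕ) : Finset ℕ :=
  S.filter (fun j => Finset.Icc (min i j) (max i j) ⊆ S)

/-- The left endpoints of the maximal intervals of consecutive integers of `S`. -/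
def leftEnds (S : Finset ℕ) : Finset ℕ :=
  S.filter (fun i => i = 0 ∨ (i - 1) ∉ S)

/-- O'Hara's degree: the sum over the maximal intervals `D` of `M(a)` of `⌈|D|/2⌉`. -/
def ecdL (a : List ℕ) : ℕ :=
  ∑ i ∈ leftEnds (Mset a), ((compF (Mset a) i).card + 1) / 2

/-- The set of active indices `Act(a) = M(a) ∪ (1 + M(a))`. -/
def ActF (a : List ℕ) : Finset ℕ :=
  Mset a ∪ (Mset a).image (· + 1)

/-- An index `j` survives in `ω(a)` iff it is not active, or it is the left endpoint `c` of a
maximal interval `D = [c, c+d]` of `M(a)` with `d` odd (i.e. `|D|` even). -/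
def survivesB (a : List ℕ) (j : ℕ) : Bool :=
  decide (j ∉ ActF a ∨ (j ∈ leftEnds (Mset a) ∧ Even (compF (Mset a) j).card))

/-- `ω(a)`: the result of removing from `a` the largest possible number of maximal pairs. -/
def omegaL (a : List ℕ) : List ℕ :=
  ((List.range a.length).filter (fun j => survivesB a j)).map (fun j => a.getD j 0)

/-- Fuel-driven recursion computing the signature (the fuel `a.length` in `sigmaL`
always suffices, since `ω` shortens a list of length ≥ 3 by at least 2). -/
def sigmaAux : ℕ → List ℕ → List ℕ
  | _, [] => []
  | 0, a => [a.sum]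
  | fuel + 1, a =>
    if a.length ≤ 2 then [a.sum]
    else List.replicate (ecdL a - 1) 0 ++ [sprL a - sprL (omegaL a)] ++ sigmaAux fuel (omegaL a)

/-- The signature `σ(a)`. -/
def sigmaL (a : List ℕ) : List ℕ := sigmaAux a.length a

/-- `m = Σ_{j=0}^k (j+1)·d_j` determined by a signature `(d_0, …, d_k)`. -/
def mOf (ds : List ℕ) : ℕ := ∑ j ∈ Finset.range ds.length, (j + 1) * ds.getD j 0

/-- `Q_n(d_0, …, d_k)`: the set of elements of `A_n(m)` of signature `(d_0, …, d_k)`. -/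
def Qset (n : ℕ) (ds : List ℕ) : Set (List ℕ) :=
  {a | a.length = n + 1 ∧ a.sum = mOf ds ∧ sigmaL a = ds}

/-- The rank `rk(a) = Σ i·a_i`. -/
def rkL (a : List ℕ) : ℕ := ∑ i ∈ Finset.range a.length, i * a.getD i 0

/-- `b` covers `a` in `A_n(m)`: `b` is obtained from `a` by replacing some consecutive pair
`(a_i, a_{i+1})` by `(a_i - 1, a_{i+1} + 1)`. -/
def coversL (b a : List ℕ) : Prop :=
  ∃ i, i + 1 < a.length ∧ 0 < a.getD i 0 ∧
    b = (a.set i (a.getD i 0 - 1)).set (i + 1) (a.getD (i + 1) 0 + 1)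

/-- Normalization phase of the raising algorithm: starting at index `i ∈ M(a)`, repeatedly
replace `i` by `i - 1` as long as `i ≥ 1` and `a_{i+1} = a_{i-1}`. -/
def rnormIdx (a : List ℕ) : ℕ → ℕ
  | 0 => 0
  | i + 1 => if a.getD (i + 2) 0 = a.getD i 0 then rnormIdx a i else i + 1

/-- One move of the raising algorithm from `(a, i)` with `i ∈ M(a)`: after normalizing the
index, either halt (`none`, at an initial element) or perform one step. -/
def raiseMove (a : List ℕ) (i : ℕ) : Option (List ℕ × ℕ) :=
  let j := rnormIdx a i
  if a.getD (j + 1) 0 = 0 then none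
  else some ((a.set j (a.getD j 0 + 1)).set (j + 1) (a.getD (j + 1) 0 - 1), j)

/-- The list of elements produced by iterating the raising algorithm (including the start). -/
def raiseList : ℕ → List ℕ → ℕ → List (List ℕ)
  | 0, a, _ => [a]
  | fuel + 1, a, i =>
    match raiseMove a i with
    | none => [a]
    | some (a', j) => a :: raiseList fuel a' j

/-- Normalization phase of the lowering algorithm: starting at index `i ∈ M(a)`, repeatedly
replace `i` by `i + 1` as long as `i ≤ n - 2` and `a_i = a_{i+2}` (fuel-driven). -/
def lnormIdx (a : List ℕ) : ℕ → ℕ → ℕ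
  | 0, i => i
  | fuel + 1, i =>
    if i + 2 < a.length ∧ a.getD i 0 = a.getD (i + 2) 0 then lnormIdx a fuel (i + 1) else i

/-- One move of the lowering algorithm from `(a, i)` with `i ∈ M(a)`: after normalizing the
index, either halt (`none`, at a terminal element) or perform one step. -/
def lowerMove (a : List ℕ) (i : ℕ) : Option (List ℕ × ℕ) :=
  let j := lnormIdx a a.length i
  if a.getD j 0 = 0 then none
  else some ((a.set j (a.getD j 0 - 1)).set (j + 1) (a.getD (j + 1) 0 + 1), j)

/-- The list of elements produced by iterating the lowering algorithm (including the start). -/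
def lowerList : ℕ → List ℕ → ℕ → List (List ℕ)
  | 0, a, _ => [a]
  | fuel + 1, a, i =>
    match lowerMove a i with
    | none => [a]
    | some (a', j) => a :: lowerList fuel a' j

/-- The colors of the successive covering relations produced by the lowering algorithm:
a lowering step at index `j` replaces `(a_j, a_{j+1})` by `(a_j - 1, a_{j+1} + 1)` and has
color `j + 1`. -/
def lowerColors : ℕ → List ℕ → ℕ → List ℕ
  | 0, _, _ => []
  | fuel + 1, a, i =>
    match lowerMove a i with
    | none => []
    | some (a', j) => (j + 1) :: lowerColors fuel a' j

/-- The transversal chain `T_i(a)`: the elements obtained from `a` by the raising algorithm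
together with those obtained by the lowering algorithm, both started at index `i ∈ M(a)`.
(The fuels `rk(a)` and `a.length * a.sum` are always sufficient, since each raising move
decreases the rank by 1 and each lowering move increases it by 1, within `[0, n·m]`.) -/
def Tset (a : List ℕ) (i : ℕ) : Set (List ℕ) :=
  {x | x ∈ raiseList (rkL a) a i ∨ x ∈ lowerList (a.length * a.sum) a i}

end OHara

namespace OHara

/-! Greedy reduction -/

/-- greedy left-to-right removal of adjacent pairs with sum `s` -/
def grd (s : ℕ) : List ℕ → List ℕ
  | [] => []
  | [x] => [x]
  | x :: y :: l => if x + y = s then grd s l else x :: grd s (y :: l)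
termination_by l => l.length

/-- number of greedy removals -/
def gdeg (s : ℕ) : List ℕ → ℕ
  | [] => 0
  | [_] => 0
  | x :: y :: l => if x + y = s then 1 + gdeg s l else gdeg s (y :: l)
termination_by l => l.length

/-- indices of adjacent pairs with sum `s` -/
def Ms (s : ℕ) (a : List ℕ) : Finset ℕ :=
  (Finset.range (a.length - 1)).filter (fun i => a.getD i 0 + a.getD (i + 1) 0 = s)

/-- upward run -/
def runF (S : Finset ℕ) (i : ℕ) : Finset ℕ :=
  S.filter (fun j => i ≤ j ∧ Finset.Icc i j ⊆ S)

lemma compF_eq_runF (S : Finset ℕ) (i : ℕ) (h : i ∈ leftEnds S) : compF S i = runF S i := by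
  unfold compF runF
  apply Finset.filter_congr
  intro j hj
  simp only [leftEnds, Finset.mem_filter] at h
  obtain ⟨hi, h⟩ := h
  constructor
  · intro hs
    have hij : i ≤ j := by
      by_contra hlt
      push Not at hlt
      rcases h with h | h
      · omega
      · apply h
        apply hs
        simp only [Finset.mem_Icc]
        omega
    refine ⟨hij, ?_⟩
    simpa [hij] using hs
  · rintro ⟨hij, hs⟩
    simpa [hij] using hs

lemma runF_of_not_mem (S : Finset ℕ) (i : ℕ) (h : i ∉ S) : (runF S i).card = 0 := by
  rw [Finset.card_eq_zero]
  ext j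
  simp only [runF, Finset.mem_filter, Finset.notMem_empty, iff_false]
  rintro ⟨_, hij, hs⟩
  exact h (hs (by simp [hij]))

lemma runF_of_mem (S : Finset ℕ) (i : ℕ) (h : i ∈ S) :
    (runF S i).card = (runF S (i + 1)).card + 1 := by
  have : runF S i = insert i (runF S (i + 1)) := by
    ext j
    simp only [runF, Finset.mem_filter, Finset.mem_insert]
    constructor
    · rintro ⟨hj, hij, hs⟩
      rcases Nat.eq_or_lt_of_le hij with e | e
      · left; exact e.symm
      · right
        exact ⟨hj, e, fun t ht => hs (by simp only [Finset.mem_Icc] at *; omega)⟩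
    · rintro (rfl | ⟨hj, hij, hs⟩)
      · exact ⟨h, le_rfl, by simpa using h⟩
      · refine ⟨hj, by omega, fun t ht => ?_⟩
        simp only [Finset.mem_Icc] at ht
        by_cases e : t = i
        · rwa [e]
        · exact hs (by simp only [Finset.mem_Icc]; omega)
  rw [this, Finset.card_insert_of_notMem]
  simp [runF]

lemma runF_shift (S S' : Finset ℕ) (h : ∀ i, i + 1 ∈ S ↔ i ∈ S') (i : ℕ) :
    (runF S (i + 1)).card = (runF S' i).card := by
  have : runF S (i + 1) = (runF S' i).image (· + 1) := by
    ext j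
    simp only [runF, Finset.mem_filter, Finset.mem_image]
    constructor
    · rintro ⟨hj, hij, hs⟩
      obtain ⟨t, rfl⟩ : ∃ t, j = t + 1 := ⟨j - 1, by omega⟩
      refine ⟨t, ⟨(h t).1 hj, by omega, fun q hq => (h q).1 (hs ?_)⟩, rfl⟩
      simp only [Finset.mem_Icc] at *; omega
    · rintro ⟨t, ⟨ht, hit, hs⟩, rfl⟩
      refine ⟨(h t).2 ht, by omega, fun q hq => ?_⟩
      simp only [Finset.mem_Icc] at hq
      obtain ⟨r, rfl⟩ : ∃ r, q = r + 1 := ⟨q - 1, by omega⟩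
      exact (h r).2 (hs (by simp only [Finset.mem_Icc]; omega))
  rw [this, Finset.card_image_of_injective _ (by intro p q; simp)]

/-- survival predicate -/
def sv (S : Finset ℕ) (j : ℕ) : Prop :=
  (j ∉ S ∧ (j = 0 ∨ j - 1 ∉ S)) ∨ ((j ∈ S ∧ (j = 0 ∨ j - 1 ∉ S)) ∧ Even (runF S j).card)

/-- degree contribution -/
def dg (S : Finset ℕ) (j : ℕ) : ℕ :=
  open Classical in if j ∈ S ∧ (j = 0 ∨ j - 1 ∉ S) then ((runF S j).card + 1) / 2 else 0

open Classical in
/-- survivors of a list -/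
noncomputable def omp (p : ℕ → Prop) (a : List ℕ) : List ℕ :=
  ((List.range a.length).filter (fun j => decide (p j))).map (fun j => a.getD j 0)

lemma omp_cons (p : ℕ → Prop) (x : ℕ) (a : List ℕ) [Decidable (p 0)] :
    omp p (x :: a) = (if p 0 then [x] else []) ++ omp (fun j => p (j + 1)) a := by
  unfold omp
  rw [List.length_cons, List.range_succ_eq_map, List.filter_cons]
  by_cases h : p 0
  · simp [h, List.filter_map, Function.comp_def]
  · simp [h, List.filter_map, Function.comp_def]

lemma survives_iff (a : List ℕ) (j : ℕ) : survivesB a j = true ↔ sv (Mset a) j := by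
  have hA : j ∉ ActF a ↔ (j ∉ Mset a ∧ (j = 0 ∨ j - 1 ∉ Mset a)) := by
    simp only [ActF, Finset.mem_union, Finset.mem_image, not_or, not_exists, not_and]
    refine and_congr Iff.rfl ?_
    constructor
    · intro h
      by_cases e : j = 0
      · exact Or.inl e
      · right; intro hm; exact h _ hm (by omega)
    · rintro (h | h) t ht e
      · omega
      · apply h; rw [← e]; simpa using ht
  have hL : j ∈ leftEnds (Mset a) ↔ (j ∈ Mset a ∧ (j = 0 ∨ j - 1 ∉ Mset a)) := by
    simp [leftEnds]
  unfold survivesB sv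
  rw [decide_eq_true_iff, hA, ← hL]
  refine or_congr Iff.rfl (and_congr_right fun h => ?_)
  rw [compF_eq_runF _ _ h]

lemma omegaL_eq (a : List ℕ) : omegaL a = omp (sv (Ms (sprL a) a)) a := by
  classical
  unfold omegaL omp
  congr 1
  apply List.filter_congr
  intro j _
  rw [Bool.eq_iff_iff, survives_iff, decide_eq_true_iff]
  rfl

lemma ecdL_eq (a : List ℕ) :
    ecdL a = ∑ j ∈ Finset.range a.length, dg (Ms (sprL a) a) j := by
  classical
  unfold ecdL dg
  rw [← Finset.sum_filter]
  have : leftEnds (Mset a) = (Finset.range a.length).filter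
      (fun j => j ∈ Ms (sprL a) a ∧ (j = 0 ∨ j - 1 ∉ Ms (sprL a) a)) := by
    ext j
    simp only [leftEnds, Finset.mem_filter, Finset.mem_range]
    constructor
    · rintro ⟨h1, h2⟩
      refine ⟨?_, h1, h2⟩
      simp only [Mset, Finset.mem_filter, Finset.mem_range] at h1
      omega
    · rintro ⟨_, h1, h2⟩
      exact ⟨h1, h2⟩
  rw [← this]
  apply Finset.sum_congr rfl
  intro j hj
  rw [compF_eq_runF _ _ hj]
  rfl

lemma mem_Ms_succ (s x : ℕ) (l : List ℕ) (i : ℕ) :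
    i + 1 ∈ Ms s (x :: l) ↔ i ∈ Ms s l := by
  simp only [Ms, Finset.mem_filter, Finset.mem_range, List.length_cons, List.getD_cons_succ]
  refine and_congr ?_ Iff.rfl
  omega

lemma mem_Ms_zero (s x y : ℕ) (l : List ℕ) : 0 ∈ Ms s (x :: y :: l) ↔ x + y = s := by
  simp [Ms]

lemma Ms_nil (s : ℕ) : Ms s [] = ∅ := by simp [Ms]

lemma Ms_single (s x : ℕ) : Ms s [x] = ∅ := by simp [Ms]

lemma sv_shift (S S' : Finset ℕ) (h : ∀ i, i + 1 ∈ S ↔ i ∈ S') (j : ℕ) (hj : j ≠ 0 ∨ 0 ∉ S) :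
    sv S (j + 1) ↔ sv S' j := by
  unfold sv
  rw [runF_shift S S' h, h]
  have : (j + 1 = 0 ∨ j + 1 - 1 ∉ S) ↔ (j = 0 ∨ j - 1 ∉ S') := by
    cases j with
    | zero => simpa using hj
    | succ t => simp [h]
  rw [this]

lemma dg_shift (S S' : Finset ℕ) (h : ∀ i, i + 1 ∈ S ↔ i ∈ S') (j : ℕ) (hj : j ≠ 0 ∨ 0 ∉ S) :
    dg S (j + 1) = dg S' j := by
  unfold dg
  rw [runF_shift S S' h]
  have : (j + 1 = 0 ∨ j + 1 - 1 ∉ S) ↔ (j = 0 ∨ j - 1 ∉ S') := by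
    cases j with
    | zero => simpa using hj
    | succ t => simp [h]
  simp only [this, h]

lemma sv_zero (S : Finset ℕ) : sv S 0 ↔ Even (runF S 0).card := by
  unfold sv
  by_cases h : 0 ∈ S
  · simp [h]
  · simp [h, runF_of_not_mem]

lemma dg_zero (S : Finset ℕ) : dg S 0 = ((runF S 0).card + 1) / 2 := by
  unfold dg
  by_cases h : 0 ∈ S
  · simp [h]
  · simp [h, runF_of_not_mem]

lemma omp_eq_grd (s : ℕ) (a : List ℕ) : omp (sv (Ms s a)) a = grd s a := by
  classical
  induction a using grd.induct s with
  | case1 => simp [omp, grd]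
  | case2 x => 
    have : sv ∅ 0 := by simp [sv]
    simp [omp, grd, Ms_single, this]
  | case3 x y l h ih =>
    have h0 : 0 ∈ Ms s (x :: y :: l) := (mem_Ms_zero ..).2 h
    have hs1 : ∀ i, i + 1 ∈ Ms s (x :: y :: l) ↔ i ∈ Ms s (y :: l) := mem_Ms_succ s x _
    have hs2 : ∀ i, i + 1 ∈ Ms s (y :: l) ↔ i ∈ Ms s l := mem_Ms_succ s y _
    have hn1 : ¬ sv (Ms s (x :: y :: l)) 1 := by simp [sv, h0]
    have hc : (runF (Ms s (x :: y :: l)) 0).card = (runF (Ms s (y :: l)) 0).card + 1 := by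
      rw [runF_of_mem _ _ h0, runF_shift _ _ hs1]
    have htail : ∀ j, j ≠ 0 → (sv (Ms s (x :: y :: l)) (j + 1 + 1) ↔ sv (Ms s l) j) := by
      intro j hj
      rw [sv_shift _ _ hs1 _ (by omega), sv_shift _ _ hs2 _ (Or.inl hj)]
    rw [grd, if_pos h, ← ih, omp_cons, omp_cons]
    simp only [zero_add, hn1, if_false, List.nil_append, sv_zero]
    by_cases h1 : 0 ∈ Ms s (y :: l)
    · have hc2 : (runF (Ms s (y :: l)) 0).card = (runF (Ms s l) 0).card + 1 := by
        rw [runF_of_mem _ _ h1, runF_shift _ _ hs2]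
      cases l with
      | nil => simp [Ms_single] at h1
      | cons z l =>
        have hz : y + z = s := (mem_Ms_zero ..).1 h1
        have hxz : x = z := by omega
        have hn2 : ¬ sv (Ms s (x :: y :: z :: l)) (0 + 1 + 1) := by
          have : 1 ∈ Ms s (x :: y :: z :: l) := (hs1 0).2 h1
          simp [sv, this]
        rw [omp_cons, omp_cons]
        simp only [hn2, if_false, List.nil_append, sv_zero]
        have : Even (runF (Ms s (x :: y :: z :: l)) 0).card ↔ Even (runF (Ms s (z :: l)) 0).card := by
          rw [hc, hc2]; simp [Nat.even_add_one]
        simp only [this]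
        simp only [hxz]
        congr 2
        funext j
        have := htail (j + 1) (by omega)
        rw [hxz] at this
        exact propext this
    · rw [hc, runF_of_not_mem _ _ h1]
      simp only [zero_add, Nat.not_even_one, if_false, List.nil_append]
      congr 1
      funext j
      apply propext
      rw [sv_shift _ _ hs1 _ (by omega), sv_shift _ _ hs2 _ (Or.inr h1)]
  | case4 x y l h ih =>
    have h0 : 0 ∉ Ms s (x :: y :: l) := fun h' => h ((mem_Ms_zero ..).1 h')
    rw [grd, if_neg h, ← ih, omp_cons]
    have : sv (Ms s (x :: y :: l)) 0 := by simp [sv, h0]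
    simp only [this, if_true, List.singleton_append]
    congr 2
    funext j
    exact propext (sv_shift _ _ (mem_Ms_succ s x _) _ (Or.inr h0))

lemma sum_dg_eq (s : ℕ) (a : List ℕ) :
    ∑ j ∈ Finset.range a.length, dg (Ms s a) j = gdeg s a := by
  classical
  induction a using grd.induct s with
  | case1 => simp [gdeg]
  | case2 x => simp [gdeg, dg, Ms_single]
  | case3 x y l h ih =>
    have h0 : 0 ∈ Ms s (x :: y :: l) := (mem_Ms_zero ..).2 h
    have hs1 : ∀ i, i + 1 ∈ Ms s (x :: y :: l) ↔ i ∈ Ms s (y :: l) := mem_Ms_succ s x _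
    have hs2 : ∀ i, i + 1 ∈ Ms s (y :: l) ↔ i ∈ Ms s l := mem_Ms_succ s y _
    have hn1 : dg (Ms s (x :: y :: l)) 1 = 0 := by simp [dg, h0]
    have hc : (runF (Ms s (x :: y :: l)) 0).card = (runF (Ms s (y :: l)) 0).card + 1 := by
      rw [runF_of_mem _ _ h0, runF_shift _ _ hs1]
    rw [gdeg, if_pos h, ← ih, List.length_cons, List.length_cons, Finset.sum_range_succ',
      Finset.sum_range_succ', zero_add, hn1, dg_zero, hc]
    by_cases h1 : 0 ∈ Ms s (y :: l)
    · have hc2 : (runF (Ms s (y :: l)) 0).card = (runF (Ms s l) 0).card + 1 := by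
        rw [runF_of_mem _ _ h1, runF_shift _ _ hs2]
      cases l with
      | nil => simp [Ms_single] at h1
      | cons z l =>
        have hn2 : dg (Ms s (x :: y :: z :: l)) (0 + 1 + 1) = 0 := by
          have : 1 ∈ Ms s (x :: y :: z :: l) := (hs1 0).2 h1
          simp [dg, this]
        rw [List.length_cons, Finset.sum_range_succ', hn2, Finset.sum_range_succ', dg_zero, hc2]
        have : ∑ k ∈ Finset.range l.length, dg (Ms s (x :: y :: z :: l)) (k + 1 + 1 + 1)
            = ∑ k ∈ Finset.range l.length, dg (Ms s (z :: l)) (k + 1) := by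
          apply Finset.sum_congr rfl
          intro j _
          rw [dg_shift _ _ hs1 _ (by omega), dg_shift _ _ hs2 _ (by omega)]
        rw [this]
        omega
    · rw [runF_of_not_mem _ _ h1]
      have : ∑ k ∈ Finset.range l.length, dg (Ms s (x :: y :: l)) (k + 1 + 1)
            = ∑ k ∈ Finset.range l.length, dg (Ms s l) k := by
        apply Finset.sum_congr rfl
        intro j _
        rw [dg_shift _ _ hs1 _ (by omega), dg_shift _ _ hs2 _ (Or.inr h1)]
      rw [this]
      omega
  | case4 x y l h ih =>
    have h0 : 0 ∉ Ms s (x :: y :: l) := fun h' => h ((mem_Ms_zero ..).1 h')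
    have h00 : dg (Ms s (x :: y :: l)) 0 = 0 := by simp [dg, h0]
    rw [gdeg, if_neg h, ← ih, List.length_cons, Finset.sum_range_succ', h00, add_zero]
    apply Finset.sum_congr rfl
    intro j _
    exact dg_shift _ _ (mem_Ms_succ s x _) _ (Or.inr h0)

lemma omegaL_grd (a : List ℕ) : omegaL a = grd (sprL a) a := by
  rw [omegaL_eq, omp_eq_grd]

lemma ecdL_gdeg (a : List ℕ) : ecdL a = gdeg (sprL a) a := by
  rw [ecdL_eq, sum_dg_eq]

/-! Properties of the greedy reduction -/

lemma grd_length (s : ℕ) (a : List ℕ) : a.length = 2 * gdeg s a + (grd s a).length := by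
  induction a using grd.induct s with
  | case1 => simp [grd, gdeg]
  | case2 x => simp [grd, gdeg]
  | case3 x y l h ih => rw [grd, gdeg, if_pos h, if_pos h]; simp; omega
  | case4 x y l h ih => rw [grd, gdeg, if_neg h, if_neg h]; simp at *; omega

lemma grd_sum (s : ℕ) (a : List ℕ) : a.sum = gdeg s a * s + (grd s a).sum := by
  induction a using grd.induct s with
  | case1 => simp [grd, gdeg]
  | case2 x => simp [grd, gdeg]
  | case3 x y l h ih =>
    rw [grd, gdeg, if_pos h, if_pos h]; simp only [List.sum_cons]; rw [ih, add_mul]; omega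
  | case4 x y l h ih =>
    rw [grd, gdeg, if_neg h, if_neg h]; simp only [List.sum_cons] at *; omega

lemma gdeg_pos (s : ℕ) (a : List ℕ) (i : ℕ) (h : i ∈ Ms s a) : 0 < gdeg s a := by
  induction a using grd.induct s generalizing i with
  | case1 => simp [Ms_nil] at h
  | case2 x => simp [Ms_single] at h
  | case3 x y l hp ih => rw [gdeg, if_pos hp]; omega
  | case4 x y l hn ih =>
    rw [gdeg, if_neg hn]
    cases i with
    | zero => exact absurd ((mem_Ms_zero ..).1 h) hn
    | succ i => exact ih i ((mem_Ms_succ ..).1 h)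

/-- adjacent sums bounded by `s` -/
abbrev Adj (s : ℕ) (a : List ℕ) : Prop := a.IsChain (fun p q => p + q ≤ s)

lemma grd_head (s : ℕ) (a : List ℕ) (w : ℕ) (ha : Adj s (w :: a)) : Adj s (w :: grd s a) := by
  induction a using grd.induct s generalizing w with
  | case1 => simp [grd]
  | case2 x => simpa [grd] using ha
  | case3 x y l h ih =>
    rw [grd, if_pos h]
    apply ih
    simp only [Adj, List.isChain_cons_cons] at ha
    cases l with
    | nil => simp
    | cons z l =>
      simp only [Adj, List.isChain_cons_cons] at ha ⊢
      refine ⟨by omega, ha.2.2.2⟩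
  | case4 x y l h ih =>
    rw [grd, if_neg h]
    simp only [Adj, List.isChain_cons_cons] at ha
    simp only [Adj, List.isChain_cons_cons]
    refine ⟨ha.1, ih x ?_⟩
    simp only [Adj, List.isChain_cons_cons]
    exact ha.2

lemma grd_adj (s : ℕ) (a : List ℕ) (ha : Adj s a) : Adj s (grd s a) := by
  by_cases h : ∃ x l, a = x :: l ∧ x ≤ s
  · have : Adj s (0 :: a) := by
      obtain ⟨x, l, rfl, hx⟩ := h
      simp only [Adj, List.isChain_cons_cons]
      exact ⟨by omega, ha⟩
    have := grd_head s a 0 this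
    exact this.tail
  · match a, ha, h with
    | [], _, _ => simp [grd]
    | [x], _, _ => simp [grd]
    | x :: y :: l, ha, h =>
      exfalso
      apply h
      simp only [Adj, List.isChain_cons_cons] at ha
      exact ⟨x, _, rfl, by omega⟩

lemma grd_insert (s : ℕ) (u : List ℕ) (x y : ℕ) (v : List ℕ) (h : x + y = s)
    (ha : Adj s (u ++ x :: y :: v)) : grd s (u ++ x :: y :: v) = grd s (u ++ v) := by
  induction u using grd.induct s with
  | case1 => simp [grd, h]
  | case2 w =>
    simp only [List.cons_append, List.nil_append] at *
    simp only [Adj, List.isChain_cons_cons] at ha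
    rw [grd]
    by_cases hw : w + x = s
    · rw [if_pos hw]
      congr 2
      omega
    · rw [if_neg hw, grd, if_pos h]
      cases v with
      | nil => simp [grd]
      | cons z v =>
        simp only [List.isChain_cons_cons] at ha
        rw [grd, if_neg (by omega)]
  | case3 p q l hp ih =>
    simp only [List.cons_append, grd, if_pos hp]
    exact ih (ha.tail.tail)
  | case4 p q l hp ih =>
    simp only [List.cons_append, grd, if_neg hp]
    congr 1
    exact ih (ha.tail)

/-! spread -/

lemma adj_iff (s : ℕ) (a : List ℕ) : Adj s a ↔ sprL a ≤ s := by
  simp only [Adj, sprL, List.isChain_iff_getElem, Finset.sup_le_iff, Finset.mem_range]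
  constructor
  · intro h i hi
    have := h i (by omega)
    rw [List.getD_eq_getElem _ _ (by omega), List.getD_eq_getElem _ _ (by omega)]
    exact this
  · intro h i hi
    have := h i (by omega)
    rw [List.getD_eq_getElem _ _ (by omega), List.getD_eq_getElem _ _ (by omega)] at this
    exact this

lemma exists_mem_Mset (a : List ℕ) (h : 2 ≤ a.length) : ∃ i, i ∈ Mset a := by
  obtain ⟨i, hi, e⟩ := Finset.exists_mem_eq_sup (Finset.range (a.length - 1))
    ⟨0, by simp; omega⟩ (fun i => a.getD i 0 + a.getD (i + 1) 0)
  exact ⟨i, by simp only [Mset, Finset.mem_filter]; exact ⟨hi, e.symm⟩⟩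

/-! the signature -/

lemma mOf_nil : mOf [] = 0 := by simp [mOf]

lemma mOf_cons (x : ℕ) (l : List ℕ) : mOf (x :: l) = x + mOf l + l.sum := by
  have : ∀ l : List ℕ, l.sum = ∑ j ∈ Finset.range l.length, l.getD j 0 := by
    intro l
    induction l with
    | nil => simp
    | cons x l ih => rw [List.sum_cons, List.length_cons, Finset.sum_range_succ']; simp [ih]; omega
  rw [this l]
  unfold mOf
  rw [List.length_cons, Finset.sum_range_succ', add_assoc, ← Finset.sum_add_distrib]
  simp only [List.getD_cons_succ, List.getD_cons_zero]
  rw [add_comm]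
  congr 1
  · ring
  · apply Finset.sum_congr rfl; intros; ring

lemma mOf_append (r d : ℕ) (l : List ℕ) :
    mOf (List.replicate r 0 ++ [d] ++ l) = (r + 1) * d + mOf l + (r + 1) * l.sum := by
  induction r with
  | zero => simp [mOf_cons]
  | succ r ih =>
    rw [List.replicate_succ, List.cons_append, List.cons_append, mOf_cons, ih]
    simp
    ring

lemma sigma_props (f : ℕ) (a : List ℕ) (hf : a.length ≤ f) :
    ∃ e, (Even a.length → e = 0) ∧ (sigmaAux f a).sum = sprL a + e ∧
      mOf (sigmaAux f a) = a.sum + (a.length - 1) / 2 * e := by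
  induction f generalizing a with
  | zero =>
    have : a = [] := List.length_eq_zero_iff.1 (by omega)
    subst this
    exact ⟨0, by simp [sigmaAux, sprL, mOf_nil]⟩
  | succ f ih =>
    match a, hf with
    | [], _ => exact ⟨0, by simp [sigmaAux, sprL, mOf_nil]⟩
    | [x], _ => exact ⟨x, by simp [sigmaAux, sprL, mOf_nil, mOf_cons]⟩
    | [x, y], _ => exact ⟨0, by simp [sigmaAux, sprL, mOf_nil, mOf_cons]⟩
    | x :: y :: z :: l, hf =>
      set a := x :: y :: z :: l with ha
      have hal : 3 ≤ a.length := by simp [ha]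
      have hs : sigmaAux (f + 1) a = List.replicate (ecdL a - 1) 0 ++
          [sprL a - sprL (omegaL a)] ++ sigmaAux f (omegaL a) := by
        rw [ha, sigmaAux, if_neg (by simp)]
        simp
      rw [hs, mOf_append]
      obtain ⟨i, hi⟩ := exists_mem_Mset a (by omega)
      have hE := gdeg_pos (sprL a) a i hi
      have hlen := grd_length (sprL a) a
      have hsum := grd_sum (sprL a) a
      have hspr : sprL (grd (sprL a) a) ≤ sprL a :=
        (adj_iff _ _).1 (grd_adj _ _ ((adj_iff _ _).2 le_rfl))
      rw [omegaL_grd, ecdL_gdeg]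
      obtain ⟨e, he1, he2, he3⟩ := ih (grd (sprL a) a) (by omega)
      generalize grd (sprL a) a = w at *
      generalize sigmaAux f w = t at *
      generalize gdeg (sprL a) a = E at *
      refine ⟨e, ?_, ?_, ?_⟩
      · intro h
        apply he1
        rw [hlen] at h
        simpa [Nat.even_add] using h
      · simp [he2]; omega
      · rw [he2, he3, hsum, Nat.sub_add_cancel hE]
        obtain ⟨q, hq⟩ := Nat.exists_eq_add_of_le hspr
        have hL : (a.length - 1) / 2 * e = (w.length - 1) / 2 * e + E * e := by
          rcases Nat.eq_zero_or_pos w.length with h0 | h0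
          · rw [he1 (by simp [h0])]; simp
          · rw [← add_mul]; congr 1; omega
        rw [hL, hq, Nat.add_sub_cancel_left]
        ring

/-! rank -/

lemma rkL_cons (x : ℕ) (l : List ℕ) : rkL (x :: l) = rkL l + l.sum := by
  have : ∀ l : List ℕ, l.sum = ∑ j ∈ Finset.range l.length, l.getD j 0 := by
    intro l
    induction l with
    | nil => simp
    | cons x l ih => rw [List.sum_cons, List.length_cons, Finset.sum_range_succ']; simp [ih]; omega
  rw [this l]
  unfold rkL
  rw [List.length_cons, Finset.sum_range_succ', ← Finset.sum_add_distrib]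
  simp only [List.getD_cons_succ, zero_mul, add_zero]
  apply Finset.sum_congr rfl; intros; ring

lemma rkL_append (u v : List ℕ) : rkL (u ++ v) = rkL u + rkL v + u.length * v.sum := by
  induction u with
  | nil => simp [rkL]
  | cons x u ih => rw [List.cons_append, rkL_cons, rkL_cons, ih]; simp; ring

lemma rkL_le (a : List ℕ) : rkL a ≤ a.length * a.sum := by
  induction a with
  | nil => simp [rkL]
  | cons x l ih => rw [rkL_cons]; simp; nlinarith

/-! chain positions -/

/-- `a` is obtained from `b` by inserting at index `i` a pair of sum `s`. -/
def Pos (s : ℕ) (b a : List ℕ) (i : ℕ) : Prop :=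
  ∃ u x y v, a = u ++ x :: y :: v ∧ u.length = i ∧ x + y = s ∧ b = u ++ v ∧ Adj s a

lemma getD_pos0 (u : List ℕ) (x y : ℕ) (v : List ℕ) :
    (u ++ x :: y :: v).getD u.length 0 = x := by simp

lemma getD_pos1 (u : List ℕ) (x y : ℕ) (v : List ℕ) :
    (u ++ x :: y :: v).getD (u.length + 1) 0 = y := by
  simp [List.getD_append_right]

lemma getD_pos2 (u : List ℕ) (x y z : ℕ) (v : List ℕ) :
    (u ++ x :: y :: z :: v).getD (u.length + 2) 0 = z := by
  simp [List.getD_append_right]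

lemma set_pos (u : List ℕ) (x y p q : ℕ) (v : List ℕ) :
    ((u ++ x :: y :: v).set u.length p).set (u.length + 1) q = u ++ p :: q :: v := by
  simp [List.set_append]

lemma pos_of_mem (a : List ℕ) (i : ℕ) (h : i ∈ Mset a) : ∃ b, Pos (sprL a) b a i := by
  simp only [Mset, Finset.mem_filter, Finset.mem_range] at h
  obtain ⟨h1, h2⟩ := h
  rw [List.getD_eq_getElem _ _ (by omega), List.getD_eq_getElem _ _ (by omega)] at h2
  refine ⟨_, a.take i, a[i], a[i + 1], a.drop (i + 2), ?_, ?_, h2, rfl, (adj_iff _ _).2 le_rfl⟩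
  · simp
  · simp; omega

lemma pos_spr {s b a i} (h : Pos s b a i) : sprL a = s := by
  obtain ⟨u, x, y, v, rfl, rfl, hxy, rfl, ha⟩ := h
  apply le_antisymm ((adj_iff _ _).1 ha)
  have : u.length ∈ Finset.range ((u ++ x :: y :: v).length - 1) := by simp
  have := Finset.le_sup (f := fun i => (u ++ x :: y :: v).getD i 0 +
    (u ++ x :: y :: v).getD (i + 1) 0) this
  simp only [getD_pos0, getD_pos1] at this
  rw [← hxy]
  exact this

lemma pos_len {s b a i} (h : Pos s b a i) : a.length = b.length + 2 := by
  obtain ⟨u, x, y, v, rfl, rfl, hxy, rfl, ha⟩ := h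
  simp; omega

lemma pos_sum {s b a i} (h : Pos s b a i) : a.sum = b.sum + s := by
  obtain ⟨u, x, y, v, rfl, rfl, hxy, rfl, ha⟩ := h
  simp; omega

lemma pos_sigma {s b a a' i i'} (h : Pos s b a i) (h' : Pos s b a' i') :
    sigmaL a = sigmaL a' := by
  have key : ∀ {a i}, Pos s b a i → grd s a = grd s b := by
    rintro a i ⟨u, x, y, v, rfl, rfl, hxy, rfl, ha⟩
    exact grd_insert s u x y v hxy ha
  have e1 : omegaL a = omegaL a' := by
    rw [omegaL_grd, omegaL_grd, pos_spr h, pos_spr h', key h, key h']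
  have e2 : ecdL a = ecdL a' := by
    rw [ecdL_gdeg, ecdL_gdeg, pos_spr h, pos_spr h']
    have l1 := grd_length s a
    have l2 := grd_length s a'
    rw [key h, pos_len h] at l1
    rw [key h', pos_len h'] at l2
    omega
  have key2 : ∀ {a i}, Pos s b a i → sigmaL a = if b.length = 0 then [a.sum] else
      List.replicate (ecdL a - 1) 0 ++ [sprL a - sprL (omegaL a)] ++
        sigmaAux (b.length + 1) (omegaL a) := by
    intro a i h
    have hl := pos_len h
    unfold sigmaL
    rw [hl]
    cases a with
    | nil => simp at hl
    | cons x l =>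
      rw [sigmaAux]
      · rw [hl]; simp
      · simp
  rw [key2 h, key2 h', e1, e2, pos_sum h, pos_sum h', pos_spr h, pos_spr h']

lemma rnorm_pos {s b a i} (h : Pos s b a i) : Pos s b a (rnormIdx a i) ∧
    (rnormIdx a i = 0 ∨
      a.getD (rnormIdx a i + 1) 0 ≠ a.getD (rnormIdx a i - 1) 0) := by
  induction i with
  | zero => exact ⟨by simpa [rnormIdx] using h, Or.inl rfl⟩
  | succ i ih =>
    rw [rnormIdx]
    split_ifs with hc
    · apply ih
      obtain ⟨u, x, y, v, rfl, hu, hxy, rfl, ha⟩ := h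
      rcases List.eq_nil_or_concat u with rfl | ⟨u', w, rfl⟩
      · simp at hu
      · simp only [List.concat_eq_append, List.length_append, List.length_singleton,
          Nat.add_right_cancel_iff] at hu
        subst hu
        have e : u'.concat w ++ x :: y :: v = u' ++ w :: x :: y :: v := by simp
        rw [e] at hc ha ⊢
        rw [getD_pos0, getD_pos2] at hc
        subst hc
        refine ⟨u', y, x, y :: v, rfl, rfl, by omega, by simp, ha⟩
    · exact ⟨h, Or.inr (by simpa using hc)⟩

lemma lnorm_pos {s b a i} (f : ℕ) (hf : a.length ≤ f + i) (h : Pos s b a i) :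
    Pos s b a (lnormIdx a f i) ∧ ¬ (lnormIdx a f i + 2 < a.length ∧
      a.getD (lnormIdx a f i) 0 = a.getD (lnormIdx a f i + 2) 0) := by
  induction f generalizing i with
  | zero =>
    refine ⟨by simpa [lnormIdx] using h, ?_⟩
    simp only [lnormIdx]
    omega
  | succ f ih =>
    rw [lnormIdx]
    split_ifs with hc
    · apply ih (by omega)
      obtain ⟨u, x, y, v, rfl, rfl, hxy, rfl, ha⟩ := h
      obtain ⟨h1, h2⟩ := hc
      cases v with
      | nil => simp at h1
      | cons z v =>
        rw [getD_pos0, getD_pos2] at h2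
        subst h2
        exact ⟨u ++ [x], y, x, v, by simp, by simp, by omega, by simp, ha⟩
    · exact ⟨h, hc⟩

lemma raise_props {s b a i} (h : Pos s b a i) :
    (raiseMove a i = none ∧ rkL a = rkL b + 2 * b.sum) ∨
    ∃ a' j, raiseMove a i = some (a', j) ∧ Pos s b a' j ∧ rkL a = rkL a' + 1 := by
  obtain ⟨h1, h2⟩ := rnorm_pos h
  unfold raiseMove
  generalize rnormIdx a i = j at *
  obtain ⟨u, x, y, v, rfl, rfl, hxy, rfl, ha⟩ := h1
  simp only [getD_pos0, getD_pos1, set_pos] at *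
  rcases List.eq_nil_or_concat u with rfl | ⟨u', w, rfl⟩
  · by_cases hy : y = 0
    · left
      subst hy
      simp [rkL_cons]; omega
    · right
      refine ⟨_, _, by rw [if_neg hy], ⟨[], x + 1, y - 1, v, rfl, rfl, by omega, rfl, ?_⟩, ?_⟩
      · simp only [List.nil_append, Adj, List.isChain_cons_cons] at ha ⊢
        refine ⟨by omega, ?_⟩
        cases v with
        | nil => simp
        | cons z v =>
          simp only [List.isChain_cons_cons] at ha ⊢
          exact ⟨by omega, ha.2.2⟩
      · simp [rkL_cons]; omega
  · have e : ∀ t, u'.concat w ++ t = u' ++ w :: t := by simp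
    have h2' : y ≠ w := by
      rcases h2 with h2 | h2
      · simp at h2
      · rw [e] at h2
        simpa using h2
    rw [e] at ha
    simp only [Adj, List.isChain_append, List.isChain_cons_cons] at ha
    have hy : y ≠ 0 := by omega
    right
    refine ⟨_, _, by rw [if_neg hy], ⟨_, x + 1, y - 1, v, rfl, rfl, by omega, rfl, ?_⟩, ?_⟩
    · rw [e]
      simp only [Adj, List.isChain_append, List.isChain_cons_cons]
      refine ⟨ha.1, ⟨by omega, by omega, ?_⟩, ?_⟩
      · cases v with
        | nil => simp
        | cons z v =>
          simp only [List.isChain_cons_cons] at ha ⊢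
          exact ⟨by omega, ha.2.1.2.2.2⟩
      · simpa using ha.2.2
    · simp only [rkL_append, rkL_cons, List.sum_cons]
      rw [show x + (y + v.sum) = x + 1 + (y - 1 + v.sum) by omega]
      omega

lemma lower_props {s b a i} (h : Pos s b a i) :
    (lowerMove a i = none ∧ rkL a = rkL b + (b.length + 1) * s) ∨
    ∃ a' j, lowerMove a i = some (a', j) ∧ Pos s b a' j ∧ rkL a' = rkL a + 1 := by
  obtain ⟨h1, h2⟩ := lnorm_pos a.length (by omega) h
  unfold lowerMove
  generalize lnormIdx a a.length i = j at *
  obtain ⟨u, x, y, v, rfl, rfl, hxy, rfl, ha⟩ := h1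
  simp only [getD_pos0, getD_pos1, set_pos] at *
  have hv : (x = 0 → v = []) ∧ (∀ z v', v = z :: v' → y + 1 + z ≤ s) := by
    cases v with
    | nil => simp
    | cons z v =>
      rw [getD_pos2] at h2
      simp only [List.length_append, List.length_cons] at h2
      simp only [Adj, List.isChain_append, List.isChain_cons_cons] at ha
      have hxz : x ≠ z := fun e => h2 ⟨by omega, e⟩
      refine ⟨by intro hx; omega, ?_⟩
      intro z' v' e
      simp only [List.cons.injEq] at e
      omega
  by_cases hx : x = 0
  · left
    have := hv.1 hx
    subst this
    subst hx
    simp [rkL_append, rkL_cons]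
    simp [rkL] 
    subst hxy
    ring
  · right
    refine ⟨_, _, by rw [if_neg hx], ⟨u, x - 1, y + 1, v, rfl, rfl, by omega, rfl, ?_⟩, ?_⟩
    · simp only [Adj, List.isChain_append, List.isChain_cons_cons] at ha ⊢
      refine ⟨ha.1, ⟨by omega, ?_⟩, ?_⟩
      · cases v with
        | nil => simp
        | cons z v =>
          have := hv.2 z v rfl
          simp only [List.isChain_cons_cons] at ha ⊢
          exact ⟨by omega, ha.2.1.2.2⟩
      · intro p hp q hq
        have := ha.2.2 p hp x (by simp)
        simp at hq
        omega
    · simp only [rkL_append, rkL_cons, List.sum_cons]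
      rw [show x - 1 + (y + 1 + v.sum) = x + (y + v.sum) by omega]
      omega

lemma raiseList_props {s b} (f : ℕ) {a i} (h : Pos s b a i)
    (hf : rkL a ≤ f + (rkL b + 2 * b.sum)) :
    rkL b + 2 * b.sum ≤ rkL a ∧ (∀ x ∈ raiseList f a i, ∃ j, Pos s b x j) ∧
    ((raiseList f a i).map rkL).reverse =
      List.range' (rkL b + 2 * b.sum) (rkL a - (rkL b + 2 * b.sum) + 1) ∧
      ∃ t, raiseList f a i = a :: t := by
  have hlow : ∀ r a i, rkL a = r → Pos s b a i → rkL b + 2 * b.sum ≤ rkL a := by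
    intro r
    induction r with
    | zero =>
      intro a i hr h
      rcases raise_props h with ⟨_, h2⟩ | ⟨a', j, _, _, h4⟩ <;> omega
    | succ r ih =>
      intro a i hr h
      rcases raise_props h with ⟨_, h2⟩ | ⟨a', j, _, h3, h4⟩
      · omega
      · have := ih a' j (by omega) h3
        omega
  refine ⟨hlow _ a i rfl h, ?_⟩
  induction f generalizing a i with
  | zero =>
    have := hlow _ a i rfl h
    have e : rkL a = rkL b + 2 * b.sum := by omega
    refine ⟨?_, ?_, [], rfl⟩
    · intro x hx
      simp only [raiseList, List.mem_singleton] at hx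
      subst hx
      exact ⟨i, h⟩
    · simp [raiseList, e]
  | succ f ih =>
    rcases raise_props h with ⟨h1, h2⟩ | ⟨a', j, h1, h3, h4⟩
    · have e : raiseList (f + 1) a i = [a] := by rw [raiseList, h1]
      rw [e]
      refine ⟨?_, ?_, [], rfl⟩
      · intro x hx
        simp only [List.mem_singleton] at hx
        subst hx
        exact ⟨i, h⟩
      · simp [h2]
    · have e : raiseList (f + 1) a i = a :: raiseList f a' j := by rw [raiseList, h1]
      rw [e]
      obtain ⟨i1, i2, _⟩ := ih h3 (by omega)
      refine ⟨?_, ?_, _, rfl⟩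
      · intro x hx
        rcases List.mem_cons.1 hx with rfl | hx
        · exact ⟨i, h⟩
        · exact i1 x hx
      · have := hlow _ a' j rfl h3
        rw [List.map_cons, List.reverse_cons, i2]
        rw [show rkL a - (rkL b + 2 * b.sum) + 1 = (rkL a' - (rkL b + 2 * b.sum) + 1) + 1 by omega,
          List.range'_1_concat (n := rkL a' - (rkL b + 2 * b.sum) + 1)]
        rw [show rkL b + 2 * b.sum + (rkL a' - (rkL b + 2 * b.sum) + 1) = rkL a by omega]

lemma lowerList_props {s b} (f : ℕ) {a i} (h : Pos s b a i)
    (hf : rkL b + (b.length + 1) * s ≤ f + rkL a) :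
    rkL a ≤ rkL b + (b.length + 1) * s ∧ (∀ x ∈ lowerList f a i, ∃ j, Pos s b x j) ∧
    ((lowerList f a i).map rkL) =
      List.range' (rkL a) (rkL b + (b.length + 1) * s - rkL a + 1) ∧
      ∃ t, lowerList f a i = a :: t := by
  have hbd : ∀ {a i}, Pos s b a i → rkL a ≤ (b.length + 2) * (b.sum + s) := by
    intro a i h
    have := rkL_le a
    rwa [pos_len h, pos_sum h] at this
  have hup : ∀ r a i, (b.length + 2) * (b.sum + s) - rkL a = r → Pos s b a i →
      rkL a ≤ rkL b + (b.length + 1) * s := by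
    intro r
    induction r with
    | zero =>
      intro a i hr h
      rcases lower_props h with ⟨_, h2⟩ | ⟨a', j, _, h3, h4⟩
      · omega
      · have := hbd h3
        omega
    | succ r ih =>
      intro a i hr h
      rcases lower_props h with ⟨_, h2⟩ | ⟨a', j, _, h3, h4⟩
      · omega
      · have := ih a' j (by omega) h3
        omega
  refine ⟨hup _ a i rfl h, ?_⟩
  induction f generalizing a i with
  | zero =>
    have := hup _ a i rfl h
    have e : rkL a = rkL b + (b.length + 1) * s := by omega
    refine ⟨?_, ?_, [], rfl⟩
    · intro x hx
      simp only [lowerList, List.mem_singleton] at hx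
      subst hx
      exact ⟨i, h⟩
    · simp [lowerList, e]
  | succ f ih =>
    rcases lower_props h with ⟨h1, h2⟩ | ⟨a', j, h1, h3, h4⟩
    · have e : lowerList (f + 1) a i = [a] := by rw [lowerList, h1]
      rw [e]
      refine ⟨?_, ?_, [], rfl⟩
      · intro x hx
        simp only [List.mem_singleton] at hx
        subst hx
        exact ⟨i, h⟩
      · simp [h2]
    · have e : lowerList (f + 1) a i = a :: lowerList f a' j := by rw [lowerList, h1]
      rw [e]
      obtain ⟨i1, i2, _⟩ := ih h3 (by omega)
      refine ⟨?_, ?_, _, rfl⟩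
      · intro x hx
        rcases List.mem_cons.1 hx with rfl | hx
        · exact ⟨i, h⟩
        · exact i1 x hx
      · have := hup _ a' j rfl h3
        rw [List.map_cons, i2, h4]
        rw [show rkL b + (b.length + 1) * s - rkL a + 1 =
          (rkL b + (b.length + 1) * s - (rkL a + 1) + 1) + 1 by omega]
        exact List.range'_succ.symm

lemma T_props {s b a i} (h : Pos s b a i) :
    (∀ x ∈ Tset a i, ∃ j, Pos s b x j) ∧
    rkL b + 2 * b.sum ≤ rkL b + (b.length + 1) * s ∧
    (Tset a i).ncard = (rkL b + (b.length + 1) * s) - (rkL b + 2 * b.sum) + 1 := by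
  have hfu : rkL b + (b.length + 1) * s ≤ a.length * a.sum := by
    have := rkL_le (b ++ [0, s])
    rw [pos_len h, pos_sum h]
    simp [rkL_append, rkL_cons] at this
    simp [rkL] at this ⊢
    nlinarith
  obtain ⟨r0, r1, r2, t, rt⟩ := raiseList_props (rkL a) h (by omega)
  obtain ⟨l0, l1, l2, t', lt⟩ := lowerList_props (a.length * a.sum) h (by omega)
  refine ⟨?_, by omega, ?_⟩
  · rintro x (hx | hx)
    · exact r1 x hx
    · exact l1 x hx
  · set W := (raiseList (rkL a) a i).reverse ++ t' with hW
    have hT : Tset a i = (W.toFinset : Set (List ℕ)) := by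
      ext x
      simp only [Tset, Set.mem_setOf_eq, hW, List.coe_toFinset, List.mem_append, List.mem_reverse]
      rw [lt, rt]
      simp only [List.mem_cons]
      tauto
    have hmap : W.map rkL = List.range' (rkL b + 2 * b.sum)
        ((rkL b + (b.length + 1) * s) - (rkL b + 2 * b.sum) + 1) := by
      rw [lt, List.map_cons, List.range'_succ] at l2
      rw [hW, List.map_append, List.map_reverse, r2, (List.cons.inj l2).2]
      rw [show rkL a + 1 = rkL b + 2 * b.sum + (rkL a - (rkL b + 2 * b.sum) + 1) by omega,
        List.range'_append_1]
      congr 1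
      omega
    have hnd : W.Nodup := by
      apply List.Nodup.of_map rkL
      rw [hmap]
      exact List.nodup_range'
    rw [hT, Set.ncard_coe_finset, List.toFinset_card_of_nodup hnd, ← List.length_map (f := rkL),
      hmap, List.length_range']

lemma sum_weights (n : ℕ) (ds : List ℕ) (hdsl : ds.length = n / 2 + 1) :
    (∑ j ∈ Finset.range (n / 2 + 1), (n - 2 * j) * ds.getD j 0) + 2 * mOf ds =
      (n + 2) * ds.sum := by
  have : ∀ l : List ℕ, l.sum = ∑ j ∈ Finset.range l.length, l.getD j 0 := by
    intro l
    induction l with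
    | nil => simp
    | cons x l ih => rw [List.sum_cons, List.length_cons, Finset.sum_range_succ']; simp [ih]; omega
  rw [this, mOf, hdsl, Finset.mul_sum, Finset.mul_sum, ← Finset.sum_add_distrib]
  apply Finset.sum_congr rfl
  intro j hj
  rw [Finset.mem_range] at hj
  obtain ⟨r, rfl⟩ : ∃ r, n = 2 * j + r := ⟨n - 2 * j, by omega⟩
  rw [Nat.add_sub_cancel_left]
  ring

end OHara

open OHara in
/-- Every transversal chain `T_i(𝔞)` of an element `𝔞 ∈ Q_n(d_0,…,d_k)` is contained in
`Q_n(d_0,…,d_k)` and has length (cardinality minus one) equal to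
`ℓ_n(d_0,…,d_k) = Σ_{j=0}^k (n-2j)·d_j`. -/
theorem transversal_chains_in_Q (n : ℕ) (hn : 1 ≤ n)
    (ds : List ℕ) (hdsl : ds.length = n / 2 + 1)
    (hne : ∃ j < ds.length, 0 < ds.getD j 0) :
    ∀ a ∈ Qset n ds, ∀ i ∈ Mset a,
      Tset a i ⊆ Qset n ds ∧
      (Tset a i).ncard =
        (∑ j ∈ Finset.range (n / 2 + 1), (n - 2 * j) * ds.getD j 0) + 1 := by
  intro a ha i hi
  obtain ⟨hlen, hsum, hsig⟩ := ha
  obtain ⟨b, hb⟩ := pos_of_mem a i hi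
  obtain ⟨t1, t2, t3⟩ := T_props hb
  refine ⟨?_, ?_⟩
  · intro x hx
    obtain ⟨j, hj⟩ := t1 x hx
    refine ⟨?_, ?_, ?_⟩
    · rw [pos_len hj, ← pos_len hb, hlen]
    · rw [pos_sum hj, ← pos_sum hb, hsum]
    · rw [pos_sigma hj hb, hsig]
  · rw [t3]
    obtain ⟨e, he1, he2, he3⟩ := sigma_props a.length a le_rfl
    change (sigmaL a).sum = _ at he2
    change mOf (sigmaL a) = _ at he3
    rw [hsig] at he2 he3
    have he : e = 0 := by
      have h0 : (a.length - 1) / 2 * e = 0 := by omega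
      rcases Nat.mul_eq_zero.1 h0 with h | h
      · apply he1
        rw [hlen] at h ⊢
        have : n = 1 := by omega
        subst this
        decide
      · exact h
    have hw := sum_weights n ds hdsl
    have hl := pos_len hb
    have hs := pos_sum hb
    rw [he2, he, add_zero, ← hsum, hs] at hw
    have hbl : b.length + 1 = n := by omega
    rw [hbl] at t2 ⊢
    rw [add_mul] at hw
    omega
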